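/- Let W and W' be thin irreducible T-modules. Then the following are equivalent: (i) W and W' are isomorphic as T-modules; (ii) W and W' have the same endpoint, dual endpoint, diameter, and the same intersection numbers a_i, b_i, c_i; (iii) W and W' have the same endpoint, dual endpoint, diameter, and the same dual intersection numbers a*_i, b*_i, c*_i. -/

import Mathlib

open Matrix
open scoped Classical

noncomputable section

/-- The full setup: a `Q`-polynomial distance-regular graph `Γ = (X,R)` of diameter `D ≥ 3`,
with adjacency matrix `A`, primitive idempotents `E_i`, eigenvalues `θ_i`,
Krein parameters `q^h_{ij}`, a fixed base vertex `x`, dual primitive idempotents `E*_i`,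
dual adjacency matrix `A*` and dual eigenvalues `θ*_i`. -/
structure TSetup (X : Type*) [Fintype X] [DecidableEq X] where
  G : SimpleGraph X
  hGconn : G.Connected
  D : ℕ
  hD3 : 3 ≤ D
  hDiamLe : ∀ y z : X, G.dist y z ≤ D
  hDiamEq : ∃ y z : X, G.dist y z = D
  p : ℕ → ℕ → ℕ → ℕ
  hDRG : ∀ h i j : ℕ, h ≤ D → i ≤ D → j ≤ D → ∀ y z : X, G.dist y z = h →
    Nat.card {w : X // G.dist y w = i ∧ G.dist z w = j} = p h i j
  A : Matrix X X ℂ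
  hA : ∀ y z : X, A y z = if G.Adj y z then 1 else 0
  E : ℕ → Matrix X X ℂ
  hEzero : ∀ i : ℕ, D < i → E i = 0
  hEsum : ∑ i ∈ Finset.range (D + 1), E i = 1
  hEidem : ∀ i j : ℕ, i ≤ D → j ≤ D → E i * E j = if i = j then E i else 0
  hEsymm : ∀ i : ℕ, (E i)ᵀ = E i
  hEreal : ∀ i : ℕ, (E i).map (starRingEnd ℂ) = E i
  hE0 : E 0 = (Fintype.card X : ℂ)⁻¹ • Matrix.of (fun _ _ => (1 : ℂ))
  θ : ℕ → ℝ
  hθinj : ∀ i j : ℕ, i ≤ D → j ≤ D → θ i = θ j → i = j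
  hAspec : A = ∑ i ∈ Finset.range (D + 1), (θ i : ℂ) • E i
  q : ℕ → ℕ → ℕ → ℝ
  hKrein : ∀ i j : ℕ, i ≤ D → j ≤ D →
    Matrix.hadamard (E i) (E j) =
      (Fintype.card X : ℂ)⁻¹ • ∑ h ∈ Finset.range (D + 1), (q h i j : ℂ) • E h
  hQpoly0 : ∀ h i j : ℕ, h ≤ D → i ≤ D → j ≤ D →
    (i + j < h ∨ h + j < i ∨ h + i < j) → q h i j = 0
  hQpoly1 : ∀ h i j : ℕ, h ≤ D → i ≤ D → j ≤ D →
    (h = i + j ∨ i = h + j ∨ j = h + i) → q h i j ≠ 0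
  x : X
  Estar : ℕ → Matrix X X ℂ
  hEstarzero : ∀ i : ℕ, D < i → Estar i = 0
  hEstar : ∀ i : ℕ, i ≤ D → ∀ y z : X,
    Estar i y z = if y = z ∧ G.dist x y = i then 1 else 0
  Astar : Matrix X X ℂ
  hAstar : ∀ y z : X, Astar y z = if y = z then (Fintype.card X : ℂ) * E 1 x y else 0
  θstar : ℕ → ℝ
  hθstarinj : ∀ i j : ℕ, i ≤ D → j ≤ D → θstar i = θstar j → i = j
  hAstarspec : Astar = ∑ i ∈ Finset.range (D + 1), (θstar i : ℂ) • Estar i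

variable {X : Type*} [Fintype X] [DecidableEq X]

/-- The Terwilliger algebra `T = T(x)`, generated by `A` and `A*`. -/
def TSetup.T (S : TSetup X) : Subalgebra ℂ (Matrix X X ℂ) :=
  Algebra.adjoin ℂ {S.A, S.Astar}

/-- A thin irreducible `T`-module `W` with endpoint `r`, dual endpoint `t` and diameter `d`,
where `E*_i W ≠ 0` iff `r ≤ i ≤ r + d` and `E_i W ≠ 0` iff `t ≤ i ≤ t + d`. -/
structure TMod (S : TSetup X) where
  W : Submodule ℂ (X → ℂ)
  hWinv : ∀ B ∈ S.T, ∀ w ∈ W, B *ᵥ w ∈ W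
  hWne : W ≠ ⊥
  hWirr : ∀ U : Submodule ℂ (X → ℂ), U ≤ W →
    (∀ B ∈ S.T, ∀ w ∈ U, B *ᵥ w ∈ U) → U = ⊥ ∨ U = W
  hthin : ∀ i : ℕ, Module.finrank ℂ (W.map (S.Estar i).mulVecLin) ≤ 1
  r : ℕ
  t : ℕ
  d : ℕ
  hr : ∀ i : ℕ, W.map (S.Estar i).mulVecLin ≠ ⊥ ↔ r ≤ i ∧ i ≤ r + d
  ht : ∀ i : ℕ, W.map (S.E i).mulVecLin ≠ ⊥ ↔ t ≤ i ∧ i ≤ t + d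

open Classical in
/-- The action of a matrix `B` on `W` (the restriction of `B` to `W`; defined to be `0`
if `B` does not leave `W` invariant). -/
def actW (S : TSetup X) (M : TMod S) (B : Matrix X X ℂ) : M.W →ₗ[ℂ] M.W :=
  if h : ∀ w ∈ M.W, B.mulVecLin w ∈ M.W then B.mulVecLin.restrict h else 0

/-- `tr_W(B)`: the trace of the action of `B` on `W`. -/
def trW (S : TSetup X) (M : TMod S) (B : Matrix X X ℂ) : ℂ :=
  LinearMap.trace ℂ M.W (actW S M B)

/-- `a_i(W) = tr_W(E*_{r+i} A)`. -/
def aW (S : TSetup X) (M : TMod S) (i : ℕ) : ℂ :=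
  trW S M (S.Estar (M.r + i) * S.A)

/-- `x_i(W) = tr_W(E*_{r+i} A E*_{r+i-1} A)`, with `x_0(W) = 0`. -/
def xW (S : TSetup X) (M : TMod S) (i : ℕ) : ℂ :=
  if i = 0 then 0 else trW S M (S.Estar (M.r + i) * S.A * S.Estar (M.r + i - 1) * S.A)

/-- `a*_i(W) = tr_W(E_{t+i} A*)`. -/
def astarW (S : TSetup X) (M : TMod S) (i : ℕ) : ℂ :=
  trW S M (S.E (M.t + i) * S.Astar)

/-- `x*_i(W) = tr_W(E_{t+i} A* E_{t+i-1} A*)`, with `x*_0(W) = 0`. -/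
def xstarW (S : TSetup X) (M : TMod S) (i : ℕ) : ℂ :=
  if i = 0 then 0 else trW S M (S.E (M.t + i) * S.Astar * S.E (M.t + i - 1) * S.Astar)

/-- The polynomials `p_i`: `p_0 = 1`, `p_{-1} = 0`,
`λ p_i = p_{i+1} + a_i(W) p_i + x_i(W) p_{i-1}`. -/
def pW (S : TSetup X) (M : TMod S) : ℕ → Polynomial ℂ
  | 0 => 1
  | 1 => Polynomial.X - Polynomial.C (aW S M 0)
  | (n + 2) =>
      (Polynomial.X - Polynomial.C (aW S M (n + 1))) * pW S M (n + 1)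
        - Polynomial.C (xW S M (n + 1)) * pW S M n

/-- The polynomials `p*_i`: `p*_0 = 1`, `p*_{-1} = 0`,
`λ p*_i = p*_{i+1} + a*_i(W) p*_i + x*_i(W) p*_{i-1}`. -/
def pstarW (S : TSetup X) (M : TMod S) : ℕ → Polynomial ℂ
  | 0 => 1
  | 1 => Polynomial.X - Polynomial.C (astarW S M 0)
  | (n + 2) =>
      (Polynomial.X - Polynomial.C (astarW S M (n + 1))) * pstarW S M (n + 1)
        - Polynomial.C (xstarW S M (n + 1)) * pstarW S M n

/-- The Hermitian inner product `⟨u,v⟩ = Σ_y u_y conj(v_y)` on `ℂ^X`. -/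
def herm (u v : X → ℂ) : ℂ := ∑ y, u y * (starRingEnd ℂ) (v y)

/-- `ν(W)`, the multiplicative inverse of `m_0(W) = tr_W(E_t E*_r)`. -/
def nuW (S : TSetup X) (M : TMod S) : ℂ :=
  (trW S M (S.E M.t * S.Estar M.r))⁻¹

/-- `k_i(W) = ν(W) m*_i(W)` where `m*_i(W) = tr_W(E*_{r+i} E_t)`. -/
def kW (S : TSetup X) (M : TMod S) (i : ℕ) : ℂ :=
  nuW S M * trW S M (S.Estar (M.r + i) * S.E M.t)

/-- `k*_i(W) = ν(W) m_i(W)` where `m_i(W) = tr_W(E_{t+i} E*_r)`. -/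
def kstarW (S : TSetup X) (M : TMod S) (i : ℕ) : ℂ :=
  nuW S M * trW S M (S.E (M.t + i) * S.Estar M.r)

/-- A `T`-module isomorphism from `W` to `W'`: a linear map carrying `W` bijectively onto
`W'` and commuting with every element of `T` on `W`. -/
def TModIso (S : TSetup X) (M M' : TMod S) : Prop :=
  ∃ σ : (X → ℂ) →ₗ[ℂ] (X → ℂ),
    Submodule.map σ M.W = M'.W ∧
    (∀ w ∈ M.W, σ w = 0 → w = 0) ∧
    (∀ B ∈ S.T, ∀ w ∈ M.W, σ (B *ᵥ w) = B *ᵥ σ w)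

/-! `W` is generated by any nonzero `u ∈ E_t W`, and the recurrence determines the action of `A` on
the components `E*_i u`, which span `W`. So if `u' ∈ E_t W'` obeys the same recurrence, the
components of `(u, u')` span the submodule of `W × W'` generated by `(u, u')`. Hence every `Y ∈ T`
multiplies `E*_i u` and `E*_i u'`, after projecting by `E*_i`, by one and the same scalar; thus
`Yu` and `Yu'` vanish together and `W ≅ T / ann u = T / ann u' ≅ W'`. Conversely an isomorphism
carries the recurrence of `u` to its image, whose nonzero components determine the coefficients.
Exchanging `A` with `A*` and `E_i` with `E*_i` gives the dual statement. -/

section ComponentSpan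

variable {ι K R M N : Type*} [CommSemiring K] [Semiring R]
  [AddCommMonoid M] [Module K M] [Module R M] [AddCommMonoid N] [Module R N]

/-- The idempotents `F i`, orthogonal and summing to `1` over the finite set `s`, generate the
`K`-algebra `R` together with `B`. The index type may be infinite: outside `s` the family `F`
vanishes automatically. -/
structure IsGeneratingSystem (K : Type*) {ι R : Type*} [CommSemiring K] [Semiring R] [Algebra K R]
    (B : R) (F : ι → R) (s : Finset ι) : Prop where
  orthogonal : OrthogonalIdempotents F
  sum_eq_one : ∑ i ∈ s, F i = 1
  adjoin_eq_top : Algebra.adjoin K (insert B (Set.range F)) = ⊤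

variable (K) in
/-- The span of the components `F i • u` of a vector `u`, the candidate for the submodule
generated by `u`. -/
def componentSpan (F : ι → R) (u : M) : Submodule K M :=
  Submodule.span K (Set.range fun i => F i • u)

lemma component_mem_componentSpan (F : ι → R) (u : M) (i : ι) : F i • u ∈ componentSpan K F u :=
  Submodule.subset_span ⟨i, rfl⟩

lemma orthogonalIdempotents_smul_smul [DecidableEq ι] {F : ι → R} (hF : OrthogonalIdempotents F)
    (i j : ι) (u : N) : F i • F j • u = if i = j then F i • u else 0 := by
  rw [smul_smul, hF.mul_eq, ite_smul, zero_smul]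

lemma sum_smul_eq_self {F : ι → R} {s : Finset ι} (hs : ∑ i ∈ s, F i = 1) (u : N) :
    ∑ i ∈ s, F i • u = u := by
  rw [← Finset.sum_smul, hs, one_smul]

variable [Algebra K R] [IsScalarTower K R M]

lemma smul_mem_span_singleton_of_mem_componentSpan {F : ι → R} (hF : OrthogonalIdempotents F)
    {u w : M} (hw : w ∈ componentSpan K F u) (i : ι) : F i • w ∈ K ∙ F i • u := by
  classical
  induction hw using Submodule.span_induction with
  | mem w hw =>
    obtain ⟨j, rfl⟩ := hw
    simp only [orthogonalIdempotents_smul_smul hF]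
    split_ifs
    · exact Submodule.mem_span_singleton_self _
    · exact zero_mem _
  | zero => simp only [smul_zero, zero_mem]
  | add v w _ _ hv hw => simpa only [smul_add] using add_mem hv hw
  | smul k w _ hw => simpa only [smul_comm (F i) k] using Submodule.smul_mem _ k hw

namespace IsGeneratingSystem

variable {B : R} {F : ι → R} {s : Finset ι}

lemma smul_mem_componentSpan (h : IsGeneratingSystem K B F s) {u : M}
    (hB : ∀ j, B • F j • u ∈ componentSpan K F u) (x : R) : x • u ∈ componentSpan K F u := by
  have stable : ∀ x : R, ∀ w ∈ componentSpan K F u, x • w ∈ componentSpan K F u := by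
    intro x
    have hx : x ∈ Algebra.adjoin K (insert B (Set.range F)) := h.adjoin_eq_top ▸ Algebra.mem_top
    induction hx using Algebra.adjoin_induction with
    | mem x hx =>
      intro w hw
      rcases hx with rfl | ⟨i, rfl⟩
      · induction hw using Submodule.span_induction with
        | mem w hw => obtain ⟨j, rfl⟩ := hw; exact hB j
        | zero => simp only [smul_zero, zero_mem]
        | add v w _ _ hv hw => simpa only [smul_add] using add_mem hv hw
        | smul k w _ hw => simpa only [smul_comm _ k] using Submodule.smul_mem _ k hw
      · exact (Submodule.span_singleton_le_iff_mem _ _).2 (component_mem_componentSpan F u i)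
          (smul_mem_span_singleton_of_mem_componentSpan h.orthogonal hw i)
    | algebraMap k =>
      intro w hw
      simpa only [algebraMap_smul] using Submodule.smul_mem _ k hw
    | add x y _ _ hx hy =>
      intro w hw
      simpa only [add_smul] using add_mem (hx w hw) (hy w hw)
    | mul x y _ _ hx hy =>
      intro w hw
      simpa only [mul_smul] using hx _ (hy w hw)
  refine stable x u ?_
  have hu : ∑ i ∈ s, F i • u ∈ componentSpan K F u :=
    sum_mem fun i _ => component_mem_componentSpan F u i
  rwa [sum_smul_eq_self h.sum_eq_one] at hu

end IsGeneratingSystem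

end ComponentSpan

section ThreeTerm

variable {K R M N : Type*} [CommSemiring K] [Semiring R]
  [AddCommMonoid M] [Module K M] [Module R M] [AddCommMonoid N] [Module K N] [Module R N]

/-- `B` acts on the components `F r • u, …, F (r + d) • u` by the three-term recurrence whose
coefficients are the intersection numbers `a`, `b`, `c`, with `b (-1)` read as `0`. -/
def ThreeTermRec (B : R) (F : ℕ → R) (r d : ℕ) (a b c : ℕ → K) (u : M) : Prop :=
  ∀ i ≤ d, B • F (r + i) • u =
    (if i = 0 then 0 else b (i - 1) • F (r + (i - 1)) • u)
      + a i • F (r + i) • u + c (i + 1) • F (r + (i + 1)) • u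

variable {B : R} {F : ℕ → R} {r d : ℕ} {a b c a' b' c' : ℕ → K} {u : M} {v : N}

lemma threeTermRec_map_iff [Algebra K R] [IsScalarTower K R M] [IsScalarTower K R N]
    (f : M →ₗ[R] N) (hf : Function.Injective f) :
    ThreeTermRec B F r d a b c (f u) ↔ ThreeTermRec B F r d a b c u := by
  simp only [ThreeTermRec, ← hf.eq_iff (a := B • _), map_add, map_smul, map_zero, apply_ite f,
    LinearMap.map_smul_of_tower]

lemma threeTermRec_smul_of_mem [Algebra K R] [IsScalarTower K R N] {U : Submodule R N} {e : R}
    (h : ∀ v ∈ U, e • v ≠ 0 → ThreeTermRec B F r d a b c (e • v)) (v : U) (hv : e • v ≠ 0) :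
    ThreeTermRec B F r d a b c (e • v) :=
  (threeTermRec_map_iff U.subtype Subtype.val_injective).1 (h v v.2 (Subtype.coe_ne_coe.2 hv))

lemma ThreeTermRec.prodMk (hu : ThreeTermRec B F r d a b c u) (hv : ThreeTermRec B F r d a b c v) :
    ThreeTermRec B F r d a b c (u, v) := by
  intro i hi
  ext
  · simpa [apply_ite Prod.fst] using hu i hi
  · simpa [apply_ite Prod.snd] using hv i hi

lemma ThreeTermRec.congr (h : ThreeTermRec B F r d a b c u) (hd : F (r + (d + 1)) • u = 0)
    (ha : ∀ i ≤ d, a i = a' i) (hb : ∀ i < d, b i = b' i)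
    (hc : ∀ i, 1 ≤ i → i ≤ d → c i = c' i) : ThreeTermRec B F r d a' b' c' u := by
  intro i hi
  have hb_term : (if i = 0 then 0 else b (i - 1) • F (r + (i - 1)) • u) =
      if i = 0 then 0 else b' (i - 1) • F (r + (i - 1)) • u := by
    split_ifs
    · rfl
    · rw [hb _ (by omega)]
  have hc_term : c (i + 1) • F (r + (i + 1)) • u = c' (i + 1) • F (r + (i + 1)) • u := by
    obtain rfl | hlt := hi.eq_or_lt
    · rw [hd, smul_zero, smul_zero]
    · rw [hc _ (by omega) hlt]
  rw [h i hi, hb_term, ha i hi, hc_term]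

lemma ThreeTermRec.smul_mem_componentSpan (h : ThreeTermRec B F r d a b c u)
    (h0 : ∀ j, ¬(r ≤ j ∧ j ≤ r + d) → F j • u = 0) (j : ℕ) :
    B • F j • u ∈ componentSpan K F u := by
  have hmem (k : K) (j : ℕ) : k • F j • u ∈ componentSpan K F u :=
    Submodule.smul_mem _ k (component_mem_componentSpan F u j)
  by_cases hj : r ≤ j ∧ j ≤ r + d
  · obtain ⟨i, rfl⟩ := Nat.exists_eq_add_of_le hj.1
    rw [h i (by omega)]
    refine add_mem (add_mem ?_ (hmem _ _)) (hmem _ _)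
    split_ifs
    · exact zero_mem _
    · exact hmem _ _
  · rw [h0 j hj, smul_zero]
    exact zero_mem _

end ThreeTerm

section Coefficients

variable {K R M : Type*} [Field K] [Ring R] [Algebra K R]
  [AddCommGroup M] [Module K M] [Module R M] [IsScalarTower K R M]
  {B : R} {F : ℕ → R} {r d : ℕ} {a b c a' b' c' : ℕ → K} {u : M}

namespace ThreeTermRec

lemma smul_diag (h : ThreeTermRec B F r d a b c u) (hF : OrthogonalIdempotents F) {i : ℕ}
    (hi : i ≤ d) : F (r + i) • B • F (r + i) • u = a i • F (r + i) • u := by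
  rw [h i hi]
  have : i = 0 ∨ i ≠ i - 1 := by omega
  rcases this with rfl | hne
  · simp [smul_comm (F _) (_ : K), orthogonalIdempotents_smul_smul hF]
  · simp [smul_comm (F _) (_ : K), orthogonalIdempotents_smul_smul hF, hne]

lemma smul_below_diag (h : ThreeTermRec B F r d a b c u) (hF : OrthogonalIdempotents F) {i : ℕ}
    (hi : i < d) : F (r + i) • B • F (r + (i + 1)) • u = b i • F (r + i) • u := by
  have : i ≠ i + 1 + 1 := by omega
  rw [h (i + 1) hi]
  simp [smul_comm (F _) (_ : K), orthogonalIdempotents_smul_smul hF, this]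

lemma smul_above_diag (h : ThreeTermRec B F r d a b c u) (hF : OrthogonalIdempotents F) {i : ℕ}
    (hi : i ≤ d) :
    F (r + (i + 1)) • B • F (r + i) • u = c (i + 1) • F (r + (i + 1)) • u := by
  have : i + 1 ≠ i - 1 := by omega
  rw [h i hi]
  simp [smul_comm (F _) (_ : K), orthogonalIdempotents_smul_smul hF, this]

lemma coeff_unique (h : ThreeTermRec B F r d a b c u) (h' : ThreeTermRec B F r d a' b' c' u)
    (hF : OrthogonalIdempotents F) (hu : ∀ i ≤ d, F (r + i) • u ≠ 0) :
    (∀ i ≤ d, a i = a' i) ∧ (∀ i < d, b i = b' i) ∧ (∀ i, 1 ≤ i → i ≤ d → c i = c' i) := by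
  refine ⟨fun i hi => ?_, fun i hi => ?_, fun i h1 hi => ?_⟩
  · exact smul_left_injective K (hu i hi) ((h.smul_diag hF hi).symm.trans (h'.smul_diag hF hi))
  · exact smul_left_injective K (hu i hi.le)
      ((h.smul_below_diag hF hi).symm.trans (h'.smul_below_diag hF hi))
  · obtain ⟨i, rfl⟩ := Nat.exists_eq_add_of_le' h1
    exact smul_left_injective K (hu _ hi)
      ((h.smul_above_diag hF (by omega)).symm.trans (h'.smul_above_diag hF (by omega)))

end ThreeTermRec

end Coefficients

section SimpleModules

variable {ι K R M M' : Type*} [Field K] [Ring R] [Algebra K R]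
  [AddCommGroup M] [Module K M] [Module R M] [IsScalarTower K R M]
  [AddCommGroup M'] [Module K M'] [Module R M'] [IsScalarTower K R M']

namespace IsGeneratingSystem

variable {B : R} {F : ι → R} {s : Finset ι}

lemma smul_eq_zero_iff_mem_annihilator [IsSimpleModule R M] (h : IsGeneratingSystem K B F s)
    {u : M} (hu : u ≠ 0) (hB : ∀ j, B • F j • u ∈ componentSpan K F u) (i : ι) :
    F i • u = 0 ↔ F i ∈ Module.annihilator R M := by
  refine ⟨fun h0 => Module.mem_annihilator.2 fun m => ?_, fun h0 => Module.mem_annihilator.1 h0 u⟩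
  obtain ⟨x, rfl⟩ := IsSimpleModule.toSpanSingleton_surjective R hu m
  simpa [h0] using smul_mem_span_singleton_of_mem_componentSpan h.orthogonal
    (h.smul_mem_componentSpan hB x) i

lemma smul_eq_zero_of_smul_eq_zero (h : IsGeneratingSystem K B F s) {u : M} {u' : M'}
    (hB : ∀ j, B • F j • (u, u') ∈ componentSpan K F (u, u'))
    (h0 : ∀ j, F j • u = 0 → F j • u' = 0) {x : R} (hx : x • u = 0) : x • u' = 0 := by
  rw [← sum_smul_eq_self h.sum_eq_one (x • u')]
  refine Finset.sum_eq_zero fun j _ => ?_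
  obtain ⟨k, hk⟩ := Submodule.mem_span_singleton.1 <|
    smul_mem_span_singleton_of_mem_componentSpan h.orthogonal (h.smul_mem_componentSpan hB x) j
  have hku : k • F j • u = F j • x • u := congrArg Prod.fst hk
  have hku' : k • F j • u' = F j • x • u' := congrArg Prod.snd hk
  rw [hx, smul_zero, smul_eq_zero] at hku
  rw [← hku', smul_eq_zero]
  exact hku.imp_right (h0 j)

lemma nonempty_linearEquiv [IsSimpleModule R M] [IsSimpleModule R M']
    (h : IsGeneratingSystem K B F s) {u : M} {u' : M'} (hu : u ≠ 0) (hu' : u' ≠ 0)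
    (hB : ∀ j, B • F j • (u, u') ∈ componentSpan K F (u, u'))
    (h0 : ∀ j, F j • u = 0 → F j • u' = 0) : Nonempty (M ≃ₗ[R] M') := by
  have hker : LinearMap.ker (LinearMap.toSpanSingleton R M u) =
      LinearMap.ker (LinearMap.toSpanSingleton R M' u') :=
    (IsSimpleModule.ker_toSpanSingleton_isMaximal R hu).eq_of_le
      (IsSimpleModule.ker_toSpanSingleton_isMaximal R hu').ne_top
      fun _ => h.smul_eq_zero_of_smul_eq_zero hB h0
  exact ⟨(LinearMap.quotKerEquivOfSurjective _
      (IsSimpleModule.toSpanSingleton_surjective R hu)).symm ≪≫ₗ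
    Submodule.quotEquivOfEq _ _ hker ≪≫ₗ
    LinearMap.quotKerEquivOfSurjective _ (IsSimpleModule.toSpanSingleton_surjective R hu')⟩

end IsGeneratingSystem

/-- The family `F` acts nontrivially on `M` exactly at the indices `r, …, r + d`: for `E*_i` this
says that `M` has endpoint `r` and diameter `d`, for `E_i` that it has dual endpoint `r`. -/
def HasSupport (F : ℕ → R) (M : Type*) [AddCommGroup M] [Module R M] (r d : ℕ) : Prop :=
  ∀ i, F i ∉ Module.annihilator R M ↔ r ≤ i ∧ i ≤ r + d

lemma HasSupport.eq_of_linearEquiv {F : ℕ → R} {r d r' d' : ℕ} (h : HasSupport F M r d)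
    (h' : HasSupport F M' r' d') (e : M ≃ₗ[R] M') : r = r' ∧ d = d' := by
  have hiff (i : ℕ) : r ≤ i ∧ i ≤ r + d ↔ r' ≤ i ∧ i ≤ r' + d' := by
    rw [← h i, ← h' i, e.annihilator_eq]
  have := hiff r
  have := hiff r'
  have := hiff (r + d)
  have := hiff (r' + d')
  omega

lemma HasSupport.exists_smul_ne_zero {F : ℕ → R} {r d : ℕ} (h : HasSupport F M r d) :
    ∃ m : M, F r • m ≠ 0 := by
  simpa [Module.mem_annihilator] using (h r).2 (by omega)

variable {B : R} {F : ℕ → R} {s : Finset ℕ} {r d : ℕ} {a b c : ℕ → K}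

lemma HasSupport.smul_eq_zero (h : HasSupport F M r d) (u : M) (j : ℕ)
    (hj : ¬(r ≤ j ∧ j ≤ r + d)) : F j • u = 0 :=
  Module.mem_annihilator.1 (not_not.1 (mt (h j).1 hj)) u

lemma HasSupport.smul_ne_zero_iff [IsSimpleModule R M] (hM : HasSupport F M r d)
    (h : IsGeneratingSystem K B F s) {u : M} (hu : u ≠ 0)
    (hrec : ThreeTermRec B F r d a b c u) (j : ℕ) : F j • u ≠ 0 ↔ r ≤ j ∧ j ≤ r + d := by
  rw [← hM j, Ne, h.smul_eq_zero_iff_mem_annihilator hu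
    (hrec.smul_mem_componentSpan (hM.smul_eq_zero u))]

lemma IsGeneratingSystem.nonempty_linearEquiv_of_threeTermRec [IsSimpleModule R M]
    [IsSimpleModule R M'] (h : IsGeneratingSystem K B F s) (hM : HasSupport F M r d)
    (hM' : HasSupport F M' r d) {u : M} {u' : M'} (hu : u ≠ 0) (hu' : u' ≠ 0)
    (hrec : ThreeTermRec B F r d a b c u) (hrec' : ThreeTermRec B F r d a b c u') :
    Nonempty (M ≃ₗ[R] M') := by
  refine h.nonempty_linearEquiv hu hu' ((hrec.prodMk hrec').smul_mem_componentSpan fun j hj => ?_)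
    fun j h0 => hM'.smul_eq_zero u' j fun hj => (hM.smul_ne_zero_iff h hu hrec j).2 hj h0
  exact Prod.ext (hM.smul_eq_zero u j hj) (hM'.smul_eq_zero u' j hj)

theorem stmt12_general [IsSimpleModule R M] [IsSimpleModule R M'] {G : ℕ → R}
    {t r' t' d' : ℕ} {a' b' c' : ℕ → K} (h : IsGeneratingSystem K B F s)
    (hF : HasSupport F M r d) (hG : HasSupport G M t d)
    (hF' : HasSupport F M' r' d') (hG' : HasSupport G M' t' d')
    (hrec : ∀ m : M, G t • m ≠ 0 → ThreeTermRec B F r d a b c (G t • m))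
    (hrec' : ∀ m : M', G t' • m ≠ 0 → ThreeTermRec B F r' d' a' b' c' (G t' • m)) :
    Nonempty (M ≃ₗ[R] M') ↔
      r = r' ∧ t = t' ∧ d = d' ∧ (∀ i ≤ d, a i = a' i) ∧ (∀ i < d, b i = b' i) ∧
        (∀ i, 1 ≤ i → i ≤ d → c i = c' i) := by
  obtain ⟨m, hm⟩ := hG.exists_smul_ne_zero
  constructor
  · rintro ⟨σ⟩
    obtain ⟨rfl, rfl⟩ := hF.eq_of_linearEquiv hF' σ
    obtain ⟨rfl, -⟩ := hG.eq_of_linearEquiv hG' σ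
    have hσ : G t • σ m ≠ 0 := by rwa [← map_smul, map_ne_zero_iff σ σ.injective]
    have hrecσ : ThreeTermRec B F r d a b c (G t • σ m) := by
      rw [← map_smul]
      exact (threeTermRec_map_iff σ.toLinearMap σ.injective).2 (hrec m hm)
    exact ⟨rfl, rfl, rfl, hrecσ.coeff_unique (hrec' _ hσ) h.orthogonal fun i hi =>
      (hF'.smul_ne_zero_iff h hσ hrecσ _).2 (by omega)⟩
  · rintro ⟨rfl, -, rfl, ha, hb, hc⟩
    obtain ⟨m', hm'⟩ := hG'.exists_smul_ne_zero
    have hd : F (r + (d + 1)) • G t • m = 0 := hF.smul_eq_zero _ _ (by omega)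
    exact h.nonempty_linearEquiv_of_threeTermRec hF hF' hm hm' ((hrec m hm).congr hd ha hb hc)
      (hrec' m' hm')

end SimpleModules

section Spectral

variable {ι K R : Type*}

lemma aeval_sum_smul [CommSemiring K] [Semiring R] [Algebra K R] {F : ι → R} {s : Finset ι}
    (hF : OrthogonalIdempotents F) (hs : ∑ i ∈ s, F i = 1) (φ : ι → K) (p : Polynomial K) :
    Polynomial.aeval (∑ i ∈ s, φ i • F i) p = ∑ i ∈ s, p.eval (φ i) • F i := by
  classical
  induction p using Polynomial.induction_on with
  | C k => simp [← Finset.smul_sum, hs, Algebra.algebraMap_eq_smul_one]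
  | add p q hp hq => simp [hp, hq, add_smul, Finset.sum_add_distrib]
  | monomial n k ih =>
    rw [pow_succ, ← mul_assoc, map_mul, ih, Polynomial.aeval_X, Finset.sum_mul]
    refine Finset.sum_congr rfl fun i hi => ?_
    have hFi : F i * ∑ j ∈ s, φ j • F j = φ i • F i := by
      simp [Finset.mul_sum, hF.mul_eq, hi]
    rw [smul_mul_assoc, hFi, smul_smul, Polynomial.eval_mul_X]

lemma mem_adjoin_sum_smul [Field K] [Ring R] [Algebra K R] {F : ι → R} {s : Finset ι}
    (hF : OrthogonalIdempotents F) (hs : ∑ i ∈ s, F i = 1) {φ : ι → K} (hφ : Set.InjOn φ s)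
    (i : ι) : F i ∈ Algebra.adjoin K {∑ j ∈ s, φ j • F j} := by
  classical
  by_cases hi : i ∈ s
  · have hbasis : Polynomial.aeval (∑ j ∈ s, φ j • F j) (Lagrange.basis s φ i) = F i := by
      rw [aeval_sum_smul hF hs, Finset.sum_eq_single_of_mem i hi, Lagrange.eval_basis_self hφ hi,
        one_smul]
      intro j hj hji
      rw [Lagrange.eval_basis_of_ne hji.symm hj, zero_smul]
    exact hbasis ▸ Polynomial.aeval_mem_adjoin_singleton K _
  · have hFi : F i = 0 := by rw [← hF.mul_sum_of_notMem hi, hs, mul_one]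
    exact hFi ▸ zero_mem _

lemma isGeneratingSystem_of_eq_sum_smul [CommSemiring K] [Semiring R] [Algebra K R] {B C : R}
    {F : ι → R} {s : Finset ι} (hF : OrthogonalIdempotents F) (hs : ∑ i ∈ s, F i = 1) {φ : ι → K}
    (hC : C = ∑ i ∈ s, φ i • F i) (hBC : Algebra.adjoin K {B, C} = ⊤) :
    IsGeneratingSystem K B F s where
  orthogonal := hF
  sum_eq_one := hs
  adjoin_eq_top := by
    rw [eq_top_iff, ← hBC, Algebra.adjoin_le_iff, Set.pair_subset_iff]
    refine ⟨Algebra.subset_adjoin (Set.mem_insert _ _), hC ▸ ?_⟩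
    exact sum_mem fun i _ => Subalgebra.smul_mem _ (Algebra.subset_adjoin (by simp)) _

end Spectral

section Terwilliger

open scoped Matrix.Module

namespace TSetup

variable (S : TSetup X)

lemma Estar_eq_diagonal (i : ℕ) :
    S.Estar i = Matrix.diagonal fun y => if S.G.dist S.x y = i then 1 else 0 := by
  ext y z
  rw [Matrix.diagonal_apply]
  obtain hi | hi := le_or_gt i S.D
  · rw [S.hEstar i hi, ite_and]
  · have hne : S.G.dist S.x y ≠ i := ((S.hDiamLe S.x y).trans_lt hi).ne
    simp [S.hEstarzero i hi, hne]

lemma orthogonalIdempotents_E : OrthogonalIdempotents S.E := by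
  refine OrthogonalIdempotents.iff_mul_eq.2 fun i j => ?_
  obtain hi | hi := le_or_gt i S.D
  · obtain hj | hj := le_or_gt j S.D
    · exact S.hEidem i j hi hj
    · rw [S.hEzero j hj, mul_zero, if_neg (by omega)]
  · rw [S.hEzero i hi, zero_mul, ite_self]

lemma orthogonalIdempotents_Estar : OrthogonalIdempotents S.Estar := by
  refine OrthogonalIdempotents.iff_mul_eq.2 fun i j => ?_
  simp only [Estar_eq_diagonal, Matrix.diagonal_mul_diagonal]
  split_ifs with hij
  · simp [hij]
  · rw [← Matrix.diagonal_zero]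
    congr with y
    grind

lemma sum_Estar : ∑ i ∈ Finset.range (S.D + 1), S.Estar i = 1 := by
  ext y z
  have hmem : S.G.dist S.x y ∈ Finset.range (S.D + 1) :=
    Finset.mem_range_succ_iff.2 (S.hDiamLe S.x y)
  obtain rfl | hyz := eq_or_ne y z
  · simp only [Matrix.sum_apply, Estar_eq_diagonal, Matrix.diagonal_apply_eq, Finset.sum_ite_eq,
      if_pos hmem, Matrix.one_apply_eq]
  · simp [Matrix.sum_apply, Estar_eq_diagonal, hyz]

lemma injOn_θ : Set.InjOn (fun i => (S.θ i : ℂ)) (Finset.range (S.D + 1)) := by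
  intro i hi j hj hij
  rw [Finset.coe_range, Set.mem_Iio, Nat.lt_succ_iff] at hi hj
  exact S.hθinj i j hi hj (Complex.ofReal_injective hij)

lemma injOn_θstar : Set.InjOn (fun i => (S.θstar i : ℂ)) (Finset.range (S.D + 1)) := by
  intro i hi j hj hij
  rw [Finset.coe_range, Set.mem_Iio, Nat.lt_succ_iff] at hi hj
  exact S.hθstarinj i j hi hj (Complex.ofReal_injective hij)

lemma E_mem_T (i : ℕ) : S.E i ∈ S.T := by
  have h := mem_adjoin_sum_smul S.orthogonalIdempotents_E S.hEsum S.injOn_θ i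
  rw [← S.hAspec] at h
  exact Algebra.adjoin_mono (by simp) h

lemma Estar_mem_T (i : ℕ) : S.Estar i ∈ S.T := by
  have h := mem_adjoin_sum_smul S.orthogonalIdempotents_Estar S.sum_Estar S.injOn_θstar i
  rw [← S.hAstarspec] at h
  exact Algebra.adjoin_mono (by simp) h

/-- The adjacency matrix `A` as an element of `T`. -/
def adj : S.T := ⟨S.A, Algebra.subset_adjoin (by simp)⟩

/-- The dual adjacency matrix `A*` as an element of `T`. -/
def dualAdj : S.T := ⟨S.Astar, Algebra.subset_adjoin (by simp)⟩

/-- The primitive idempotent `E_i` as an element of `T`. -/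
def idem (i : ℕ) : S.T := ⟨S.E i, S.E_mem_T i⟩

/-- The dual primitive idempotent `E*_i` as an element of `T`. -/
def dualIdem (i : ℕ) : S.T := ⟨S.Estar i, S.Estar_mem_T i⟩

lemma adjoin_adj_dualAdj : Algebra.adjoin ℂ {S.adj, S.dualAdj} = ⊤ := by
  have h : (Subtype.val ⁻¹' {S.A, S.Astar} : Set S.T) = {S.adj, S.dualAdj} := by
    ext B
    simp [adj, dualAdj, Subtype.ext_iff]
  rw [← h]
  exact Algebra.adjoin_adjoin_coe_preimage

lemma isGeneratingSystem_dualIdem :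
    IsGeneratingSystem ℂ S.adj S.dualIdem (Finset.range (S.D + 1)) := by
  refine isGeneratingSystem_of_eq_sum_smul (φ := fun i => (S.θstar i : ℂ)) ?_ ?_ ?_
    S.adjoin_adj_dualAdj
  · exact (OrthogonalIdempotents.map_injective_iff S.T.val.toRingHom Subtype.val_injective).1
      S.orthogonalIdempotents_Estar
  · exact Subtype.ext (by simpa [dualIdem] using S.sum_Estar)
  · exact Subtype.ext (by simpa [dualIdem, dualAdj] using S.hAstarspec)

lemma isGeneratingSystem_idem :
    IsGeneratingSystem ℂ S.dualAdj S.idem (Finset.range (S.D + 1)) := by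
  refine isGeneratingSystem_of_eq_sum_smul (φ := fun i => (S.θ i : ℂ)) ?_ ?_ ?_
    (Set.pair_comm S.adj S.dualAdj ▸ S.adjoin_adj_dualAdj)
  · exact (OrthogonalIdempotents.map_injective_iff S.T.val.toRingHom Subtype.val_injective).1
      S.orthogonalIdempotents_E
  · exact Subtype.ext (by simpa [idem] using S.hEsum)
  · exact Subtype.ext (by simpa [idem, adj] using S.hAspec)

end TSetup

namespace TMod

variable {S : TSetup X} (M M' : TMod S)

/-- The space `W` as a submodule of the `T`-module `ℂ^X`. -/
def toSubmodule : Submodule S.T (X → ℂ) :=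
  { M.W with smul_mem' := fun B w hw => M.hWinv B B.2 w hw }

instance : IsSimpleModule S.T M.toSubmodule := by
  rw [isSimpleModule_iff_isAtom]
  refine ⟨fun h => M.hWne (congrArg (Submodule.restrictScalars ℂ) h), fun U hU => ?_⟩
  have hirr := M.hWirr (U.restrictScalars ℂ) hU.le fun B hB w hw => U.smul_mem ⟨B, hB⟩ hw
  refine Submodule.restrictScalars_injective ℂ S.T _ (hirr.resolve_right fun h => hU.ne ?_)
  exact Submodule.restrictScalars_injective ℂ S.T _ h

lemma mem_annihilator_iff (B : S.T) :
    B ∈ Module.annihilator S.T M.toSubmodule ↔ M.W.map (B : Matrix X X ℂ).mulVecLin = ⊥ := by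
  rw [Submodule.mem_annihilator, ← le_bot_iff, Submodule.map_le_iff_le_comap]
  rfl

lemma hasSupport_dualIdem : HasSupport S.dualIdem M.toSubmodule M.r M.d := fun i =>
  (M.mem_annihilator_iff _).not.trans (M.hr i)

lemma hasSupport_idem : HasSupport S.idem M.toSubmodule M.t M.d := fun i =>
  (M.mem_annihilator_iff _).not.trans (M.ht i)

lemma tModIso_iff :
    TModIso S M M' ↔ Nonempty (M.toSubmodule ≃ₗ[S.T] M'.toSubmodule) := by
  constructor
  · rintro ⟨σ, hmap, hinj, hcomm⟩
    have hinjOn : Set.InjOn σ M.W := fun v hv w hw hvw =>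
      sub_eq_zero.1 (hinj _ (sub_mem hv hw) (by rw [map_sub, hvw, sub_self]))
    let f : M.toSubmodule →ₗ[S.T] M'.toSubmodule :=
      { toFun := fun w => ⟨σ w, hmap.le ⟨w, w.2, rfl⟩⟩
        map_add' := fun v w => Subtype.ext (map_add σ v.1 w.1)
        map_smul' := fun B w => Subtype.ext (hcomm B B.2 w w.2) }
    have hf : Function.Injective f := fun v w hvw =>
      Subtype.ext (hinjOn v.2 w.2 (congrArg Subtype.val hvw))
    have hf' : Function.Surjective f := fun w => by
      obtain ⟨v, hv, hvw⟩ := hmap.ge w.2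
      exact ⟨⟨v, hv⟩, Subtype.ext hvw⟩
    exact ⟨LinearEquiv.ofBijective f ⟨hf, hf'⟩⟩
  · rintro ⟨f⟩
    let f₀ : M.W →ₗ[ℂ] X → ℂ := (M'.toSubmodule.subtype ∘ₗ f.toLinearMap).restrictScalars ℂ
    obtain ⟨σ, hσ⟩ := f₀.exists_extend
    have hσf (w : M.toSubmodule) : σ w = f w := LinearMap.congr_fun hσ w
    refine ⟨σ, le_antisymm ?_ fun w hw => ?_, fun w hw h0 => ?_, fun B hB w hw => ?_⟩
    · rintro _ ⟨w, hw, rfl⟩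
      exact hσf ⟨w, hw⟩ ▸ (f ⟨w, hw⟩).2
    · obtain ⟨v, hv⟩ := f.surjective ⟨w, hw⟩
      exact ⟨v, v.2, (hσf v).trans (congrArg Subtype.val hv)⟩
    · rw [hσf ⟨w, hw⟩, ZeroMemClass.coe_eq_zero, map_eq_zero_iff f f.injective] at h0
      exact congrArg Subtype.val h0
    · let B₀ : S.T := ⟨B, hB⟩
      let w₀ : M.toSubmodule := ⟨w, hw⟩
      calc σ (B *ᵥ w) = f (B₀ • w₀) := hσf (B₀ • w₀)
        _ = B *ᵥ f w₀ := congrArg Subtype.val (map_smul f B₀ w₀)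
        _ = B *ᵥ σ w := congrArg (B *ᵥ ·) (hσf w₀).symm

end TMod

end Terwilliger

/-- Two thin irreducible `T`-modules are isomorphic iff they have the same endpoint, dual
endpoint, diameter and intersection numbers, iff they have the same endpoint, dual
endpoint, diameter and dual intersection numbers. -/
theorem stmt12 (S : TSetup X) (M M' : TMod S)
    (b c b' c' bs cs bs' cs' : ℕ → ℂ)
    (hbd : b M.d = 0) (hc0 : c 0 = 0) (hcd : c (M.d + 1) = 0)
    (hbc : ∀ u ∈ M.W.map (S.E M.t).mulVecLin, u ≠ 0 → ∀ i ≤ M.d,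
      S.A *ᵥ (S.Estar (M.r + i) *ᵥ u) =
        (if i = 0 then 0 else b (i - 1) • (S.Estar (M.r + (i - 1)) *ᵥ u))
          + aW S M i • (S.Estar (M.r + i) *ᵥ u)
          + c (i + 1) • (S.Estar (M.r + (i + 1)) *ᵥ u))
    (hbd' : b' M'.d = 0) (hc0' : c' 0 = 0) (hcd' : c' (M'.d + 1) = 0)
    (hbc' : ∀ u ∈ M'.W.map (S.E M'.t).mulVecLin, u ≠ 0 → ∀ i ≤ M'.d,
      S.A *ᵥ (S.Estar (M'.r + i) *ᵥ u) =
        (if i = 0 then 0 else b' (i - 1) • (S.Estar (M'.r + (i - 1)) *ᵥ u))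
          + aW S M' i • (S.Estar (M'.r + i) *ᵥ u)
          + c' (i + 1) • (S.Estar (M'.r + (i + 1)) *ᵥ u))
    (hbsd : bs M.d = 0) (hcs0 : cs 0 = 0) (hcsd : cs (M.d + 1) = 0)
    (hbcs : ∀ v ∈ M.W.map (S.Estar M.r).mulVecLin, v ≠ 0 → ∀ i ≤ M.d,
      S.Astar *ᵥ (S.E (M.t + i) *ᵥ v) =
        (if i = 0 then 0 else bs (i - 1) • (S.E (M.t + (i - 1)) *ᵥ v))
          + astarW S M i • (S.E (M.t + i) *ᵥ v)
          + cs (i + 1) • (S.E (M.t + (i + 1)) *ᵥ v))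
    (hbsd' : bs' M'.d = 0) (hcs0' : cs' 0 = 0) (hcsd' : cs' (M'.d + 1) = 0)
    (hbcs' : ∀ v ∈ M'.W.map (S.Estar M'.r).mulVecLin, v ≠ 0 → ∀ i ≤ M'.d,
      S.Astar *ᵥ (S.E (M'.t + i) *ᵥ v) =
        (if i = 0 then 0 else bs' (i - 1) • (S.E (M'.t + (i - 1)) *ᵥ v))
          + astarW S M' i • (S.E (M'.t + i) *ᵥ v)
          + cs' (i + 1) • (S.E (M'.t + (i + 1)) *ᵥ v)) :
    (TModIso S M M' ↔
      (M.r = M'.r ∧ M.t = M'.t ∧ M.d = M'.d ∧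
        (∀ i ≤ M.d, aW S M i = aW S M' i) ∧
        (∀ i < M.d, b i = b' i) ∧
        (∀ i : ℕ, 1 ≤ i → i ≤ M.d → c i = c' i))) ∧
    (TModIso S M M' ↔
      (M.r = M'.r ∧ M.t = M'.t ∧ M.d = M'.d ∧
        (∀ i ≤ M.d, astarW S M i = astarW S M' i) ∧
        (∀ i < M.d, bs i = bs' i) ∧
        (∀ i : ℕ, 1 ≤ i → i ≤ M.d → cs i = cs' i))) := by
  open scoped Matrix.Module in
  constructor
  · exact (M.tModIso_iff M').trans <| stmt12_general S.isGeneratingSystem_dualIdem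
      M.hasSupport_dualIdem M.hasSupport_idem M'.hasSupport_dualIdem M'.hasSupport_idem
      (threeTermRec_smul_of_mem fun u hu => hbc _ ⟨u, hu, rfl⟩)
      (threeTermRec_smul_of_mem fun u hu => hbc' _ ⟨u, hu, rfl⟩)
  · exact ((M.tModIso_iff M').trans <| stmt12_general S.isGeneratingSystem_idem
      M.hasSupport_idem M.hasSupport_dualIdem M'.hasSupport_idem M'.hasSupport_dualIdem
      (threeTermRec_smul_of_mem fun v hv => hbcs _ ⟨v, hv, rfl⟩)
      (threeTermRec_smul_of_mem fun v hv => hbcs' _ ⟨v, hv, rfl⟩)).trans and_left_comm
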